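/- If f(x) = 2x(1+x*x)^{-1} on a C*-algebra, then for any contraction Z with ‖Z‖ ≤ 1 there exists X (namely X = (1+(1−ZZ*)^{1/2})^{-1}Z) with f(X) = Z; moreover ‖f(Y)‖ ≤ 1 for all Y. -/

import Mathlib

section

variable {A : Type*} [CStarAlgebra A] [PartialOrder A] [StarOrderedRing A]

theorem isUnit_one_add_of_nonneg {a : A} (ha : 0 ≤ a) : IsUnit (1 + a) :=
  CStarAlgebra.isUnit_of_le 1 (le_add_of_nonneg_right ha)

theorem CStarAlgebra.norm_le_one_iff_star_mul_self_le_one {a : A} : ‖a‖ ≤ 1 ↔ star a * a ≤ 1 := by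
  rw [← CStarAlgebra.norm_le_one_iff_of_nonneg _ (star_mul_self_nonneg a),
    CStarRing.norm_star_mul_self, ← sq, sq_le_one_iff₀ (norm_nonneg a)]

theorem CStarAlgebra.one_sub_mul_star_self_nonneg {a : A} (ha : ‖a‖ ≤ 1) : 0 ≤ 1 - a * star a := by
  rw [← norm_star, CStarAlgebra.norm_le_one_iff_star_mul_self_le_one, star_star] at ha
  exact sub_nonneg.mpr ha

theorem mul_inverse_one_add_star_mul_self (x : A) :
    x * Ring.inverse (1 + star x * x) = Ring.inverse (1 + x * star x) * x := by
  have h₁ := isUnit_one_add_of_nonneg (star_mul_self_nonneg x)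
  have h₂ := isUnit_one_add_of_nonneg (mul_star_self_nonneg x)
  rw [← h₂.mul_right_inj, Ring.mul_inverse_cancel_left _ _ h₂, ← h₁.mul_left_inj, ← mul_assoc,
    Ring.inverse_mul_cancel_right _ _ h₁]
  noncomm_ring

theorem norm_two_mul_mul_inverse_one_add_star_mul_self_le (y : A) :
    ‖2 * (y * Ring.inverse (1 + star y * y))‖ ≤ 1 := by
  have hc := isUnit_one_add_of_nonneg (star_mul_self_nonneg y)
  set r := Ring.inverse (1 + star y * y) with hr
  have hcr : (1 + star y * y) * r = 1 := Ring.mul_inverse_cancel _ hc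
  have hrc : r * (1 + star y * y) = 1 := Ring.inverse_mul_cancel _ hc
  have hsr : star r = r := by simp [hr, ← Ring.inverse_star]
  rw [CStarAlgebra.norm_le_one_iff_star_mul_self_le_one, ← sub_nonneg]
  have key : 1 - star (2 * (y * r)) * (2 * (y * r)) =
      star ((1 - star y * y) * r) * ((1 - star y * y) * r) := by
    have h : (1 : A) = r * (1 + star y * y) * ((1 + star y * y) * r) := by rw [hcr, hrc, one_mul]
    simp only [star_mul, star_sub, star_one, star_star, hsr, star_ofNat]
    nth_rw 1 [h]
    noncomm_ring
  rw [key]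
  exact star_mul_self_nonneg _

theorem two_mul_inverse_one_add_mul_star_self_mul {s z : A} (hs : 0 ≤ s)
    (hsz : s * s = 1 - z * star z) {x : A} (hx : x = Ring.inverse (1 + s) * z) :
    2 * (Ring.inverse (1 + x * star x) * x) = z := by
  have hu := isUnit_one_add_of_nonneg hs
  have hss : star s = s := (IsSelfAdjoint.of_nonneg hs).star_eq
  have hxx : 1 + x * star x = 2 * Ring.inverse (1 + s) := by
    have hz : z * star z = (1 - s) * (1 + s) := by
      rw [← sub_sub_cancel 1 (z * star z), ← hsz]; noncomm_ring
    have hxs : x * star x = Ring.inverse (1 + s) * (1 - s) := by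
      rw [hx, star_mul, ← Ring.inverse_star, star_add, star_one, hss,
        mul_assoc, ← mul_assoc z, hz, Ring.mul_inverse_cancel_right _ _ hu]
    rw [hxs]
    nth_rw 1 [← Ring.inverse_mul_cancel _ hu]
    noncomm_ring
  have hz : (1 + x * star x) * z = 2 * x := by rw [hxx, mul_assoc, ← hx]
  rw [two_mul, ← mul_add, ← two_mul, ← hz,
    Ring.inverse_mul_cancel_left _ _ (isUnit_one_add_of_nonneg (mul_star_self_nonneg x))]

end

/-- For `f(x) = 2x(1+x*x)⁻¹` on a unital C*-algebra, any contraction `Z` with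
`‖Z‖ ≤ 1` is of the form `f(X)` with `X = (1+(1−ZZ*)^{1/2})⁻¹ Z`; moreover
`‖f(Y)‖ ≤ 1` for all `Y`. -/
theorem contraction_in_range_of_f
    {M : Type*} [CStarAlgebra M] [PartialOrder M] [StarOrderedRing M]
    [NormedAlgebra ℂ M] [StarModule ℂ M]
    (Z : M) (hZ : ‖Z‖ ≤ 1)
    (X : M) (hX : X = Ring.inverse (1 + CFC.sqrt (1 - Z * star Z)) * Z) :
    2 * (X * Ring.inverse (1 + star X * X)) = Z ∧
    2 * (Ring.inverse (1 + X * star X) * X) = Z ∧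
    ∀ Y : M, ‖2 * (Y * Ring.inverse (1 + star Y * Y))‖ ≤ 1 := by
  have hs : CFC.sqrt (1 - Z * star Z) * CFC.sqrt (1 - Z * star Z) = 1 - Z * star Z :=
    CFC.sqrt_mul_sqrt_self _ (CStarAlgebra.one_sub_mul_star_self_nonneg hZ)
  have h := two_mul_inverse_one_add_mul_star_self_mul (CFC.sqrt_nonneg _) hs hX
  exact ⟨by rwa [mul_inverse_one_add_star_mul_self], h,
    norm_two_mul_mul_inverse_one_add_star_mul_self_le⟩
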